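/- Let s > 1 be an integer. Suppose nonzero integers w, m, y satisfy: y divides m, and w divides smy + gcd(w,s) or smy − gcd(w,s). Then the residue class w + smℤ is s-good with good representative w, and for every integer r with r ≡ w (mod sm) and r ∉ {0, w, gcd(w,s), −gcd(w,s)}, the number s/r is a 2-step relation number. -/

import Mathlib

/-- `a = [[1,0],[1,1]]` as an element of `SL(2, ℂ)`. -/
def matA : Matrix.SpecialLinearGroup (Fin 2) ℂ :=
  ⟨!![1, 0; 1, 1], by simp [Matrix.det_fin_two_of]⟩

/-- `b_q = [[1,q],[0,1]]` as an element of `SL(2, ℂ)`. -/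
def matB (q : ℂ) : Matrix.SpecialLinearGroup (Fin 2) ℂ :=
  ⟨!![1, q; 0, 1], by simp [Matrix.det_fin_two_of]⟩

/-- `q` is a relation number: the homomorphism `F₂ → SL(2,ℂ)`, `x ↦ a`, `y ↦ b_q`,
is not injective. -/
def IsRelationNumber (q : ℂ) : Prop :=
  ¬ Function.Injective
    (FreeGroup.lift (fun i : Bool => if i then matA else matB q) :
      FreeGroup Bool →* Matrix.SpecialLinearGroup (Fin 2) ℂ)

/-- `q` is an `ℓ`-step relation number: there are `k ≤ ℓ` and nonzero integers
`m_1, …, m_{2k+1}` with `b_q^{m_1} a^{m_2} ⋯ b_q^{m_{2k+1}}` lower triangular. -/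
def IsStepRelationNumber (ℓ : ℕ) (q : ℂ) : Prop :=
  ∃ k : ℕ, k ≤ ℓ ∧ ∃ m : Fin (2 * k + 1) → ℤ, (∀ i, m i ≠ 0) ∧
    ((List.ofFn (fun i : Fin (2 * k + 1) =>
      (if (i : ℕ) % 2 = 0 then matB q else matA) ^ (m i))).prod).val 0 1 = 0

/-- The residue class `w + smℤ` is `s`-good with good representative `w`. -/
def IsGoodRep (s w m : ℤ) : Prop :=
  ∃ y : ℤ, y * (Int.gcd w (s * m) : ℤ) ∣ m * (Int.gcd w s : ℤ) ∧
    (w ∣ s * m * y + (Int.gcd w (s * m) : ℤ) ∨ w ∣ s * m * y - (Int.gcd w (s * m) : ℤ))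

/-!
Choose `δ = ± gcd w s` with `w ∣ s * m * y + δ`, say `w * c = s * m * y + δ`. For
`r = w + s * m * n = δ * r'` one gets `r * c = δ + s * m * u` with `u = n * c + y`, so that
`1 + (m * u * r') * (s / r) = r' * c`. Writing `m = y * t`, the integer `m * u * r'` factors both as
`(r' * u) * m` and as `(t * u) * (r' * y)`; using one factorization at each end of a five-letter
word leaves a single linear condition on the middle exponent, which `-n` satisfies. All exponents
are nonzero: `u = 0` would force `r ∣ δ`, hence `r = ± gcd w s`.
-/

section Words

theorem map_zpow_of_sq_sub_one_eq_zero {G R : Type*} [Group G] [Ring R] (f : G →* R) {g : G}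
    (hg : (f g - 1) ^ 2 = 0) (n : ℤ) : f (g ^ n) = 1 + n • (f g - 1) := by
  obtain ⟨N, hN⟩ : ∃ N, f g = 1 + N := ⟨f g - 1, by abel⟩
  rw [hN, add_sub_cancel_left, sq] at hg
  have map_inv_eq : f g⁻¹ = 1 - N := by
    have inv_mul : f g⁻¹ * (1 + N) = 1 := by rw [← hN, ← map_mul, inv_mul_cancel, map_one]
    have mul_inv : (1 + N) * (1 - N) = 1 := by simp [mul_sub, add_mul, hg]
    exact left_inv_eq_right_inv inv_mul mul_inv
  rw [hN, add_sub_cancel_left]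
  induction n with
  | zero => simp
  | succ n ih =>
    rw [zpow_add_one, map_mul, ih, hN, add_mul, mul_add, smul_mul_assoc, mul_add, hg, add_smul]
    simp only [one_mul, mul_one, add_zero, one_smul]
    abel
  | pred n ih =>
    rw [zpow_sub_one, map_mul, ih, map_inv_eq, add_mul, mul_sub, smul_mul_assoc, mul_sub, hg,
      sub_smul]
    simp only [one_mul, mul_one, sub_zero, one_smul]
    abel

theorem specialLinearGroup_zpow_val_of_sq_sub_one_eq_zero {ι R : Type*} [Fintype ι]
    [DecidableEq ι] [CommRing R] {A : Matrix.SpecialLinearGroup ι R} (hA : (A.val - 1) ^ 2 = 0)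
    (n : ℤ) : (A ^ n).val = 1 + n • (A.val - 1) := by
  simp only [← Matrix.SpecialLinearGroup.coeMonoidHom_apply] at hA ⊢
  exact map_zpow_of_sq_sub_one_eq_zero _ hA n

theorem matA_zpow_val (n : ℤ) : (matA ^ n).val = !![1, 0; (n : ℂ), 1] := by
  have hsq : (matA.val - 1) ^ 2 = 0 := by
    simp [matA, sq, Matrix.one_fin_two, ← Matrix.ext_iff]
  rw [specialLinearGroup_zpow_val_of_sq_sub_one_eq_zero hsq]
  simp [matA, Matrix.one_fin_two]

theorem matB_zpow_val (q : ℂ) (n : ℤ) : (matB q ^ n).val = !![1, n * q; 0, 1] := by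
  have hsq : ((matB q).val - 1) ^ 2 = 0 := by
    simp [matB, sq, Matrix.one_fin_two]
  rw [specialLinearGroup_zpow_val_of_sq_sub_one_eq_zero hsq]
  simp [matB, Matrix.one_fin_two]

variable (q : ℂ) (k₁ k₂ k₃ k₄ k₅ : ℤ)

theorem five_letter_word_apply_zero_one :
    (matB q ^ k₁ * matA ^ k₂ * matB q ^ k₃ * matA ^ k₄ * matB q ^ k₅).val 0 1 =
      q * (k₁ * (1 + k₄ * k₅ * q) + k₅ * (1 + k₁ * k₂ * q)
        + k₃ * (1 + k₁ * k₂ * q) * (1 + k₄ * k₅ * q)) := by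
  simp only [Matrix.SpecialLinearGroup.coe_mul, matA_zpow_val, matB_zpow_val, Matrix.mul_fin_two,
    Matrix.of_apply, Matrix.cons_val_zero, Matrix.cons_val_one]
  ring

variable {q k₁ k₂ k₃ k₄ k₅}

theorem isStepRelationNumber_two_of_word (h₁ : k₁ ≠ 0) (h₂ : k₂ ≠ 0) (h₃ : k₃ ≠ 0) (h₄ : k₄ ≠ 0)
    (h₅ : k₅ ≠ 0)
    (hword : (matB q ^ k₁ * matA ^ k₂ * matB q ^ k₃ * matA ^ k₄ * matB q ^ k₅).val 0 1 = 0) :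
    IsStepRelationNumber 2 q := by
  refine ⟨2, le_rfl, ![k₁, k₂, k₃, k₄, k₅], fun i => by fin_cases i <;> assumption, ?_⟩
  simpa [List.ofFn_succ, mul_assoc] using hword

theorem isStepRelationNumber_two_of_mul_eq_mul (h₁ : k₁ ≠ 0) (h₂ : k₂ ≠ 0) (h₃ : k₃ ≠ 0)
    (h₄ : k₄ ≠ 0) (h₅ : k₅ ≠ 0) (hmul : k₁ * k₂ = k₄ * k₅)
    (hsum : k₁ + k₅ + k₃ * (1 + k₁ * k₂ * q) = 0) : IsStepRelationNumber 2 q := by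
  refine isStepRelationNumber_two_of_word h₁ h₂ h₃ h₄ h₅ ?_
  have hmul' : (k₁ * k₂ : ℂ) = k₄ * k₅ := mod_cast hmul
  rw [five_letter_word_apply_zero_one, ← hmul']
  linear_combination q * (1 + k₁ * k₂ * q) * hsum

end Words

section Arithmetic

theorem exists_associated_dvd_add {R : Type*} [Ring R] {w a g : R}
    (h : w ∣ a + g ∨ w ∣ a - g) : ∃ δ, Associated δ g ∧ w ∣ a + δ := by
  rcases h with h | h
  · exact ⟨g, .refl g, h⟩
  · exact ⟨-g, (Associated.refl g).neg_left, by rwa [← sub_eq_add_neg]⟩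

variable {s w m y δ r : ℤ}

theorem isStepRelationNumber_two_div (hm : m ≠ 0) (hym : y ∣ m) (hw : w ∣ s * m * y + δ)
    (hr : s * m ∣ r - w) (hr0 : r ≠ 0) (hrw : r ≠ w) (hδr : δ ∣ r) (hrδ : ¬ r ∣ δ) :
    IsStepRelationNumber 2 ((s : ℂ) / r) := by
  obtain ⟨t, rfl⟩ := hym
  obtain ⟨hy0, ht0⟩ := mul_ne_zero_iff.mp hm
  obtain ⟨c, hc⟩ := hw
  obtain ⟨n, hn⟩ := hr
  obtain ⟨r', rfl⟩ := hδr
  have hr'0 : r' ≠ 0 := right_ne_zero_of_mul hr0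
  have hn0 : n ≠ 0 := by
    rintro rfl
    exact hrw (by linear_combination hn)
  set u := n * c + y with hu
  have mul_c_eq : δ * r' * c = δ + s * (y * t) * u := by linear_combination c * hn - hc
  have hu0 : u ≠ 0 := fun h => hrδ ⟨c, by rw [mul_c_eq, h, mul_zero, add_zero]⟩
  have common_factor :
      1 + (r' * u : ℤ) * (y * t : ℤ) * ((s : ℂ) / (δ * r' : ℤ)) = (r' * c : ℤ) := by
    have hr0' : ((δ * r' : ℤ) : ℂ) ≠ 0 := mod_cast hr0
    rw [← mul_div_assoc, ← eq_sub_iff_add_eq', div_eq_iff hr0']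
    norm_cast
    linear_combination -r' * mul_c_eq
  refine isStepRelationNumber_two_of_mul_eq_mul (k₁ := r' * u) (k₂ := y * t) (k₃ := -n)
    (k₄ := -(t * u)) (k₅ := -(r' * y)) (mul_ne_zero hr'0 hu0) hm (neg_ne_zero.mpr hn0)
    (neg_ne_zero.mpr (mul_ne_zero ht0 hu0)) (neg_ne_zero.mpr (mul_ne_zero hr'0 hy0)) (by ring) ?_
  rw [common_factor]
  norm_cast
  rw [hu]
  ring

theorem gcd_mul_eq_gcd_of_dvd_add (hδ : δ ∣ Int.gcd w s) (hw : w ∣ s * m * y + δ) :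
    Int.gcd w (s * m) = Int.gcd w s := by
  have hdvd_δ : (Int.gcd w (s * m) : ℤ) ∣ δ :=
    (dvd_add_right ((Int.gcd_dvd_right ..).mul_right y)).mp ((Int.gcd_dvd_left ..).trans hw)
  exact Nat.dvd_antisymm (Int.natCast_dvd_natCast.mp (hdvd_δ.trans hδ))
    (Int.gcd_dvd_gcd_mul_right_right w s m)

theorem isGoodRep_of_gcd_mul_eq_gcd (hgcd : Int.gcd w (s * m) = Int.gcd w s) (hym : y ∣ m)
    (hw : w ∣ s * m * y + (Int.gcd w s : ℤ) ∨ w ∣ s * m * y - (Int.gcd w s : ℤ)) :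
    IsGoodRep s w m := by
  rw [IsGoodRep, hgcd]
  exact ⟨y, mul_dvd_mul_right hym _, hw⟩

theorem gcd_dvd_of_dvd_sub (hr : s ∣ r - w) : (Int.gcd w s : ℤ) ∣ r :=
  (dvd_iff_dvd_of_dvd_sub ((Int.gcd_dvd_right ..).trans hr)).mpr (Int.gcd_dvd_left ..)

end Arithmetic

theorem stmt12 (s w m y : ℤ) (hs : 1 < s) (hw : w ≠ 0) (hm : m ≠ 0) (hy : y ≠ 0)
    (hym : y ∣ m)
    (hdvd : w ∣ s * m * y + (Int.gcd w s : ℤ) ∨ w ∣ s * m * y - (Int.gcd w s : ℤ)) :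
    IsGoodRep s w m ∧
      ∀ r : ℤ, s * m ∣ r - w → r ≠ 0 → r ≠ w →
        r ≠ (Int.gcd w s : ℤ) → r ≠ -(Int.gcd w s : ℤ) →
          IsStepRelationNumber 2 ((s : ℂ) / (r : ℂ)) := by
  obtain ⟨δ, hδ, hwδ⟩ := exists_associated_dvd_add hdvd
  have hgcd : Int.gcd w (s * m) = Int.gcd w s := gcd_mul_eq_gcd_of_dvd_add hδ.dvd hwδ
  refine ⟨isGoodRep_of_gcd_mul_eq_gcd hgcd hym hdvd, fun r hr hr0 hrw hrg hrg' => ?_⟩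
  have hgr : (Int.gcd w s : ℤ) ∣ r := gcd_dvd_of_dvd_sub (dvd_of_mul_right_dvd hr)
  have hrδ : ¬ r ∣ δ := fun h =>
    (Int.associated_iff.mp (associated_of_dvd_dvd (h.trans hδ.dvd) hgr)).elim hrg hrg'
  exact isStepRelationNumber_two_div hm hym hwδ hr hr0 hrw (hδ.dvd.trans hgr) hrδ
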